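/- arXiv:0801.0001 — 6 statements merged into one kernel-verified Lean document; each statement's English description precedes it below -/
import Mathlib

section
/- Let h ≥ 1 and let φ(x_1,…,x_h,y) = u_1x_1 + ⋯ + u_hx_h + vy be a linear form with nonzero integer coefficients u_1,…,u_h,v. Let 𝒜 = (A_1,…,A_h) be an h-tuple of nonempty finite sets of integers, let B be an infinite set of integers, and let t be a positive integer. If (𝒜,B) is t-complementing with respect to φ, then B is periodic: there exists a positive integer m such that for every integer n, n ∈ B if and only if n + m ∈ B (equivalently, B is a union of congruence classes modulo m). -/
/-- The representation function associated to the linear form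
`φ(x₁,…,x_h,y) = u₁x₁ + ⋯ + u_h x_h + v y`, the `h`-tuple `A` of finite sets of
integers, and the set `B` of integers:
`R(n) = card {(a,b) : a_i ∈ A_i, b ∈ B, u₁a₁ + ⋯ + u_h a_h + v b = n}`. -/
noncomputable def repFn {h : ℕ} (u : Fin h → ℤ) (v : ℤ) (A : Fin h → Finset ℤ)
    (B : Set ℤ) (n : ℤ) : ℕ∞ :=
  {p : (Fin h → ℤ) × ℤ |
    (∀ i, p.1 i ∈ A i) ∧ p.2 ∈ B ∧ (∑ i, u i * p.1 i) + v * p.2 = n}.encard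

/-
Let `C = vB`. The number of representations of `n` is `∑ₐ 1_C(n - f(a))`, where `a` runs over the
finite set `A₁ × ⋯ × A_h` and `f(a) = ∑ uᵢaᵢ`; that is, it is the convolution of `1_C` with a
nonzero finitely supported weight `w`. Being finite-valued, `1_C` shows the same pattern on two
windows as long as the support of `w`, and their distance `M` can be taken to be a multiple of any
period of the convolution. The difference `1_C(· + M) - 1_C` then satisfies the homogeneous
recurrence with coefficients `w` and vanishes on a window. Solving the recurrence for its two
extreme terms extends the vanishing one step at a time to all of `ℤ`. So `M`, hence also `vM`, is a
period of `vB`, and `M` is a period of `B`.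
-/

/-- The convolution `n ↦ ∑ₖ w(k) c(n - k)` of a finitely supported weight `w` on `ℤ` with an
arbitrary two-sided sequence `c`. The equation `convolve w c = g` is a linear recurrence for `c`
with coefficients `w`. -/
def convolve {R V : Type*} [Zero R] [AddCommMonoid V] [SMul R V] (w : ℤ →₀ R) (c : ℤ → V)
    (n : ℤ) : V :=
  w.sum fun k r ↦ r • c (n - k)

lemma convolve_shift_sub {R V : Type*} [Semiring R] [AddCommGroup V] [Module R V] (w : ℤ →₀ R)
    (c : ℤ → V) (M n : ℤ) :
    convolve w (fun x ↦ c (x + M) - c x) n = convolve w c (n + M) - convolve w c n := by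
  simp only [convolve, smul_sub, Finsupp.sum_sub, sub_add_eq_add_sub]

section Recurrence

variable {R V : Type*} [Ring R] [IsDomain R] [AddCommGroup V] [Module R V]
  [Module.IsTorsionFree R V] {w : ℤ →₀ R} {d : ℤ → V} {k a b p : ℤ}

lemma eq_zero_of_convolve_eq_zero {n : ℤ} (hd : convolve w d n = 0) (hk : k ∈ w.support)
    (h : ∀ j ∈ w.support, j ≠ k → d (n - j) = 0) : d (n - k) = 0 := by
  have hsum : convolve w d n = w k • d (n - k) :=
    Finset.sum_eq_single_of_mem k hk fun j hj hjk ↦ by simp only [h j hj hjk, smul_zero]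
  exact (smul_eq_zero.1 (hsum ▸ hd)).resolve_left (Finsupp.mem_support_iff.1 hk)

lemma eq_zero_right_of_convolve_eq_zero (ha : IsLeast (w.support : Set ℤ) a)
    (hb : b ∈ upperBounds (w.support : Set ℤ)) (hd : convolve w d = 0)
    (h : ∀ x ∈ Set.Ico p (p + (b - a)), d x = 0) : d (p + (b - a)) = 0 := by
  have key := eq_zero_of_convolve_eq_zero (congrFun hd (p + b)) ha.1 fun j hj hja ↦
    h _ ⟨by linarith [hb hj], by linarith [(ha.2 hj).lt_of_ne' hja]⟩
  rwa [add_sub_assoc] at key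

lemma eq_zero_left_of_convolve_eq_zero (ha : a ∈ lowerBounds (w.support : Set ℤ))
    (hb : IsGreatest (w.support : Set ℤ) b) (hd : convolve w d = 0)
    (h : ∀ x ∈ Set.Ico p (p + (b - a)), d x = 0) : d (p - 1) = 0 := by
  have key := eq_zero_of_convolve_eq_zero (congrFun hd (p - 1 + b)) hb.1 fun j hj hjb ↦
    h _ ⟨by have := (hb.2 hj).lt_of_ne hjb; lia, by linarith [ha hj]⟩
  rwa [add_sub_cancel_right] at key

lemma eq_zero_of_convolve_eq_zero_of_window (ha : IsLeast (w.support : Set ℤ) a)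
    (hb : IsGreatest (w.support : Set ℤ) b) (hd : convolve w d = 0)
    (h : ∀ x ∈ Set.Ico p (p + (b - a)), d x = 0) : d = 0 := by
  have window (q : ℤ) : ∀ x ∈ Set.Ico q (q + (b - a)), d x = 0 := by
    induction q using Int.inductionOn' (b := p) with
    | zero => exact h
    | succ q _ ih =>
      intro x hx
      obtain rfl | hxq := eq_or_ne x (q + (b - a))
      · exact eq_zero_right_of_convolve_eq_zero ha hb.2 hd ih
      · exact ih x (by grind)
    | pred q _ ih =>
      intro x hx
      obtain rfl | hxq := eq_or_ne x (q - 1)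
      · exact eq_zero_left_of_convolve_eq_zero ha.2 hb hd ih
      · exact ih x (by grind)
  funext x
  have hx := eq_zero_right_of_convolve_eq_zero ha hb.2 hd (window (x - (b - a)))
  rwa [sub_add_cancel] at hx

end Recurrence

lemma exists_pos_dvd_window_eq {α : Type*} {c : ℤ → α} (hc : (Set.range c).Finite) {m : ℤ}
    (hm : m ≠ 0) (L : ℤ) :
    ∃ M > 0, m ∣ M ∧ ∃ p, ∀ x ∈ Set.Ico p (p + L), c (x + M) = c x := by
  let window (p : ℤ) (i : Set.Ico 0 L) : α := c (p + i)
  have window_mem (p : ℤ) : window p ∈ Set.univ.pi fun _ ↦ Set.range c := fun i _ ↦ ⟨p + i, rfl⟩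
  obtain ⟨_, ⟨r, rfl⟩, _, ⟨s, rfl⟩, hlt, heq⟩ :=
    (Set.infinite_range_of_injective (mul_right_injective₀ hm)).exists_lt_map_eq_of_mapsTo
      (fun p _ ↦ window_mem p) (Set.Finite.pi fun _ ↦ hc)
  refine ⟨m * s - m * r, sub_pos.2 hlt, ⟨s - r, (mul_sub m s r).symm⟩, m * r, fun x hx ↦ ?_⟩
  have hx' := congrFun heq ⟨x - m * r, by grind⟩
  simp only [window, add_sub_cancel] at hx'
  rw [hx']
  ring_nf

theorem exists_periodic_of_convolve_periodic {R V : Type*} [Ring R] [IsDomain R] [AddCommGroup V]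
    [Module R V] [Module.IsTorsionFree R V] {w : ℤ →₀ R} (hw : w ≠ 0) {c : ℤ → V}
    (hc : (Set.range c).Finite) {m : ℤ} (hm : m ≠ 0) (hper : Function.Periodic (convolve w c) m) :
    ∃ M > 0, Function.Periodic c M := by
  have hsupp : w.support.Nonempty := Finsupp.support_nonempty_iff.2 hw
  obtain ⟨M, hM, ⟨s, rfl⟩, p, hp⟩ := exists_pos_dvd_window_eq hc hm
    (w.support.max' hsupp - w.support.min' hsupp)
  have hdiff : convolve w (fun x ↦ c (x + m * s) - c x) = 0 := by
    funext n
    have hn : convolve w c (n + s * m) = convolve w c n := hper.int_mul s n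
    rw [convolve_shift_sub, mul_comm m s, hn, sub_self, Pi.zero_apply]
  have hzero := eq_zero_of_convolve_eq_zero_of_window (w.support.isLeast_min' hsupp)
    (w.support.isGreatest_max' hsupp) hdiff fun x hx ↦ sub_eq_zero.2 (hp x hx)
  exact ⟨m * s, hM, fun x ↦ sub_eq_zero.1 (congrFun hzero x)⟩

open Classical in
lemma convolve_sum_single_indicator {ι : Type*} (P : Finset ι) (f : ι → ℤ) (C : Set ℤ) (n : ℤ) :
    convolve (∑ a ∈ P, Finsupp.single (f a) (1 : ℤ)) (C.indicator (1 : ℤ → ℤ)) n =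
      (P.filter fun a ↦ n - f a ∈ C).card := by
  rw [convolve, ← Finsupp.sum_finsetSum_index (by simp) (by simp [add_mul])]
  simp [Set.indicator_apply, Finset.sum_boole]

lemma sum_single_one_ne_zero {ι : Type*} {P : Finset ι} (hP : P.Nonempty) (f : ι → ℤ) :
    ∑ a ∈ P, Finsupp.single (f a) (1 : ℤ) ≠ 0 := by
  intro h
  have hcard := congrArg Finsupp.degree h
  simp [hP.ne_empty] at hcard

open Classical in
theorem exists_periodic_of_card_filter_periodic {ι : Type*} {P : Finset ι} (hP : P.Nonempty)
    {f : ι → ℤ} {C : Set ℤ} {m : ℤ} (hm : m ≠ 0)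
    (hper : Function.Periodic (fun n ↦ (P.filter fun a ↦ n - f a ∈ C).card) m) :
    ∃ M > 0, Function.Periodic (· ∈ C) M := by
  have hrange : (Set.range (C.indicator (1 : ℤ → ℤ))).Finite :=
    (Set.toFinite {0, 1}).subset <| Set.range_subset_iff.2 fun x ↦ by
      by_cases hx : x ∈ C <;> simp [hx]
  obtain ⟨M, hM, hM_per⟩ := exists_periodic_of_convolve_periodic (sum_single_one_ne_zero hP f)
    hrange hm fun n ↦ by simp only [convolve_sum_single_indicator, hper n]
  refine ⟨M, hM, fun x ↦ ?_⟩
  simp only [← Set.indicator_eq_one_iff_mem ℤ, hM_per x]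

open Classical in
lemma repFn_eq_card_filter {h : ℕ} (u : Fin h → ℤ) {v : ℤ} (hv : v ≠ 0) (A : Fin h → Finset ℤ)
    (B : Set ℤ) (n : ℤ) :
    repFn u v A B n =
      ((Fintype.piFinset A).filter fun a ↦ n - ∑ i, u i * a i ∈ (v * ·) '' B).card := by
  rw [repFn, ← Set.encard_coe_eq_coe_finsetCard, ← Set.InjOn.encard_image (f := Prod.fst)]
  · congr 1
    ext a
    simp [eq_sub_iff_add_eq', and_assoc]
  · rintro ⟨a, b⟩ ⟨-, -, hb⟩ ⟨_, b'⟩ ⟨-, -, hb'⟩ rfl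
    exact congrArg _ (mul_left_cancel₀ hv (add_left_cancel (hb.trans hb'.symm)))

lemma periodic_mem_of_periodic_mem_image_mul {v : ℤ} (hv : v ≠ 0) {B : Set ℤ} {M : ℤ}
    (h : Function.Periodic (· ∈ (v * ·) '' B) M) : Function.Periodic (· ∈ B) M := by
  intro n
  have hn := h.int_mul v (v * n)
  simpa only [Int.cast_id, ← mul_add, (mul_right_injective₀ hv).mem_set_image] using hn

theorem stmt0_general {h : ℕ} (u : Fin h → ℤ) {v : ℤ} (hv : v ≠ 0) {A : Fin h → Finset ℤ}
    (hA : ∀ i, (A i).Nonempty) {B : Set ℤ} {r : ℤ} (hr : r ≠ 0)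
    (hper : Function.Periodic (repFn u v A B) r) :
    ∃ m : ℕ, 0 < m ∧ ∀ n : ℤ, n ∈ B ↔ n + m ∈ B := by
  classical
  obtain ⟨M, hM, hM_per⟩ := exists_periodic_of_card_filter_periodic
    (Fintype.piFinset_nonempty.2 hA) (f := fun a ↦ ∑ i, u i * a i) (C := (v * ·) '' B) hr
    fun n ↦ by simpa only [repFn_eq_card_filter u hv, Nat.cast_inj] using hper n
  have hB_per := periodic_mem_of_periodic_mem_image_mul hv hM_per
  lift M to ℕ using hM.le
  exact ⟨M, Nat.cast_pos.1 hM, fun n ↦ (iff_of_eq (hB_per n)).symm⟩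

theorem stmt0 {h : ℕ} (hh : 1 ≤ h) (u : Fin h → ℤ) (v : ℤ)
    (hu : ∀ i, u i ≠ 0) (hv : v ≠ 0)
    (A : Fin h → Finset ℤ) (hA : ∀ i, (A i).Nonempty)
    (B : Set ℤ) (hB : B.Infinite) (t : ℕ) (ht : 0 < t)
    (hcomp : ∀ n : ℤ, repFn u v A B n = t) :
    ∃ m : ℕ, 0 < m ∧ ∀ n : ℤ, n ∈ B ↔ n + m ∈ B :=
  stmt0_general u hv hA one_ne_zero fun n ↦ by rw [hcomp, hcomp]
end

section
/- Let h ≥ 1 and let φ(x_1,…,x_h,y) = u_1x_1 + ⋯ + u_hx_h + vy be a linear form with nonzero integer coefficients u_1,…,u_h,v, and set ψ(x_1,…,x_h) = u_1x_1 + ⋯ + u_hx_h. Let 𝒜 = (A_1,…,A_h) be an h-tuple of nonempty finite sets of integers with |A_i| > 1 for at least one i, let B be an infinite set of integers, and let t be a positive integer. Set g_min = min(ψ(𝒜)), g_max = max(ψ(𝒜)), and d = ⌊(g_max − g_min)/|v|⌋. If (𝒜,B) is t-complementing with respect to φ, then B is periodic with a period m satisfying 1 ≤ m ≤ 2^d;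 that is, there exists a positive integer m ≤ 2^d such that for every integer n, n ∈ B if and only if n + m ∈ B. -/
/-!
Write `g a` for the value of the linear form `ψ` at `a`, and choose `a₀` minimising `v * g a`. In a
representation `g a + v * b = g a₀ + v * k` one then has `b = k - x` with `0 ≤ x ≤ d`, and `a₀`
itself realises `x = 0`. Suppose `B` has the same pattern on `[l - d, l - 1]` as on
`[k - d, k - 1]`, but `k ∈ B` and `l ∉ B`. Then every `a` representing `g a₀ + v * l` also
represents `g a₀ + v * k`, while `a₀` represents only the latter, so the two representation counts
differ. Hence the previous `d` memberships determine the next one, and the window of the last `d`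
memberships, having at most `2 ^ d` states, must cycle with a period at most `2 ^ d`.
-/

open Function Filter

section Periodicity

variable {α : Type*} {f : ℤ → α}

theorem apply_add_natCast_eq_of_eq (hf : ∀ k l, f k = f l → f (k + 1) = f (l + 1)) {k l : ℤ}
    (hkl : f k = f l) (n : ℕ) : f (k + n) = f (l + n) := by
  induction n with
  | zero => simpa using hkl
  | succ n ih => simpa [add_assoc] using hf _ _ ih

variable [Fintype α]

theorem exists_forall_ge_apply_add_eq (hf : ∀ k l, f k = f l → f (k + 1) = f (l + 1)) (K : ℤ) :
    ∃ m ∈ Finset.Icc 1 (Fintype.card α), ∀ k ≥ K, f (k + m) = f k := by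
  obtain ⟨i, hi, j, hj, hij, heq⟩ := Finset.exists_ne_map_eq_of_card_lt_of_maps_to
    (s := Finset.range (Fintype.card α + 1)) (t := Finset.univ) (by simp)
    (f := fun i : ℕ ↦ f (K - Fintype.card α + i)) fun _ _ ↦ Finset.mem_univ _
  wlog hlt : i < j generalizing i j
  · exact this j hj i hi hij.symm heq.symm (by lia)
  rw [Finset.mem_range] at hi hj
  refine ⟨j - i, by rw [Finset.mem_Icc]; lia, fun k hk ↦ ?_⟩
  obtain ⟨n, rfl⟩ := Int.exists_add_of_le (show K - Fintype.card α + i ≤ k by lia)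
  rw [apply_add_natCast_eq_of_eq hf heq n]
  congr 1
  lia

theorem exists_periodic_le_card (hf : ∀ k l, f k = f l → f (k + 1) = f (l + 1)) :
    ∃ m : ℕ, 1 ≤ m ∧ m ≤ Fintype.card α ∧ Periodic f m := by
  -- The period on `[K, ∞)` may depend on `K`, but there are finitely many candidates: if each
  -- failed somewhere, all would fail on a common half-line.
  by_contra! hnot
  have hfail : ∀ m ∈ Finset.Icc 1 (Fintype.card α), ∀ᶠ K in atBot, ∃ k ≥ K, f (k + m) ≠ f k := by
    intro m hm
    obtain ⟨hm₁, hm₂⟩ := Finset.mem_Icc.mp hm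
    obtain ⟨k, hk⟩ := not_forall.mp (hnot m hm₁ hm₂)
    exact (eventually_le_atBot k).mono fun K hK ↦ ⟨k, hK, hk⟩
  obtain ⟨K, hK⟩ := ((eventually_all_finset _).mpr hfail).exists
  obtain ⟨m, hm, hperiod⟩ := exists_forall_ge_apply_add_eq hf K
  obtain ⟨k, hk, hne⟩ := hK m hm
  exact hne (hperiod k hk)

theorem exists_periodic_le_card_pow {d : ℕ}
    (hf : ∀ k l, (∀ j ∈ Set.Icc (1 : ℤ) d, f (k - j) = f (l - j)) → f k = f l) :
    ∃ m : ℕ, 1 ≤ m ∧ m ≤ Fintype.card α ^ d ∧ Periodic f m := by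
  let window (k : ℤ) (i : Fin d) : α := f (k - (i + 1 : ℕ))
  have apply_eq {k l : ℤ} (hkl : window k = window l) : f k = f l := by
    refine hf k l fun j ⟨hj₁, hjd⟩ ↦ ?_
    convert congrFun hkl ⟨(j - 1).toNat, by lia⟩ using 3 <;> lia
  have window_succ (k l : ℤ) (hkl : window k = window l) : window (k + 1) = window (l + 1) := by
    funext ⟨i, hi⟩
    cases i with
    | zero => simpa [window] using apply_eq hkl
    | succ i => simpa [window, add_sub_add_right_eq_sub] using congrFun hkl ⟨i, by lia⟩
  obtain ⟨m, hm, hcard, hperiod⟩ := exists_periodic_le_card window_succ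
  exact ⟨m, hm, by simpa using hcard, fun k ↦ apply_eq (hperiod k)⟩

end Periodicity

section Representations

variable {ι : Type*} {s : Finset ι} {g : ι → ℤ} {v : ℤ} {B : Set ℤ}

/-- The representation function of a finite family of integers `g a`, `a ∈ s`, and a set `B`: the
number of pairs `(a, b)` with `g a + v * b = n`. It counts indices, so repeated values of `g` are
counted with multiplicity; `repFn` is the case of a linear form `g` on a box `s`. -/
noncomputable def familyRepFn (s : Finset ι) (g : ι → ℤ) (v : ℤ) (B : Set ℤ) (n : ℤ) : ℕ∞ :=
  {p : ι × ℤ | p.1 ∈ s ∧ p.2 ∈ B ∧ g p.1 + v * p.2 = n}.encard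

theorem repFn_eq_familyRepFn {h : ℕ} (u : Fin h → ℤ) (v : ℤ) (A : Fin h → Finset ℤ) (B : Set ℤ) :
    repFn u v A B = familyRepFn (Fintype.piFinset A) (fun a ↦ ∑ i, u i * a i) v B := by
  funext n
  simp only [repFn, familyRepFn, Fintype.mem_piFinset]

theorem familyRepFn_eq_encard (hv : v ≠ 0) (n : ℤ) :
    familyRepFn s g v B n = {a | a ∈ s ∧ ∃ b ∈ B, g a + v * b = n}.encard := by
  have hinj : Set.InjOn Prod.fst {p : ι × ℤ | p.1 ∈ s ∧ p.2 ∈ B ∧ g p.1 + v * p.2 = n} := by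
    rintro ⟨a, b⟩ ⟨-, -, hb⟩ ⟨a', b'⟩ ⟨-, -, hb'⟩ rfl
    exact Prod.ext rfl (mul_left_cancel₀ hv (add_left_cancel (hb.trans hb'.symm)))
  rw [familyRepFn, ← hinj.encard_image]
  congr 1
  ext a
  simp

theorem exists_mem_forall_nonneg_of_eq_add_mul (hv : v ≠ 0) (hs : s.Nonempty) (g : ι → ℤ) :
    ∃ a₀ ∈ s, ∀ a ∈ s, ∀ x, g a = g a₀ + v * x → 0 ≤ x := by
  obtain ⟨a₀, ha₀, hmin⟩ := s.exists_min_image (fun a ↦ v * g a) hs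
  refine ⟨a₀, ha₀, fun a ha x hx ↦ ?_⟩
  have hsq : 0 ≤ v ^ 2 * x := by linear_combination hmin a ha + v * hx
  exact nonneg_of_mul_nonneg_right hsq (by positivity)

theorem le_ediv_abs_of_mul_eq_sub {x y z lo hi : ℤ} (hv : v ≠ 0) (h : v * x = y - z)
    (hy : y ∈ Set.Icc lo hi) (hz : z ∈ Set.Icc lo hi) : x ≤ (hi - lo) / |v| := by
  rw [Int.le_ediv_iff_mul_le (abs_pos.mpr hv)]
  calc x * |v| ≤ |x| * |v| := by gcongr; exact le_abs_self x
    _ = |y - z| := by rw [← h, abs_mul, mul_comm]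
    _ ≤ hi - lo := abs_sub_le_of_le_of_le hy.1 hy.2 hz.1 hz.2

theorem mem_of_mem_of_forall_sub_mem (hv : v ≠ 0) (hper : Periodic (familyRepFn s g v B) v)
    {a₀ : ι} (ha₀ : a₀ ∈ s) {d : ℤ}
    (hrange : ∀ a ∈ s, ∀ x, g a = g a₀ + v * x → x ∈ Set.Icc 0 d) {k l : ℤ}
    (hpast : ∀ j ∈ Set.Icc 1 d, l - j ∈ B → k - j ∈ B) (hk : k ∈ B) : l ∈ B := by
  by_contra hl
  let reps (n : ℤ) : Set ι := {a | a ∈ s ∧ ∃ b ∈ B, g a + v * b = g a₀ + n * v}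
  have hsub : reps l ⊆ reps k := by
    rintro a ⟨ha, b, hb, hab⟩
    obtain ⟨hnonneg, hle⟩ := hrange a ha (l - b) (by linear_combination hab)
    have hbl : b ≠ l := fun h ↦ hl (h ▸ hb)
    refine ⟨ha, k - (l - b), hpast (l - b) ⟨by lia, hle⟩ (by simpa using hb), ?_⟩
    linear_combination hab
  have hmem : a₀ ∈ reps k := ⟨ha₀, k, hk, by ring⟩
  have hnotMem : a₀ ∉ reps l := by
    rintro ⟨-, b, hb, hab⟩
    have hbl : b = l := mul_left_cancel₀ hv (by linear_combination hab)
    exact hl (hbl ▸ hb)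
  have hlt : (reps l).encard < (reps k).encard :=
    (s.finite_toSet.subset fun _ ha ↦ ha.1).encard_lt_encard
      (hsub.ssubset_of_mem_notMem hmem hnotMem)
  have heq : (reps l).encard = (reps k).encard := by
    simp only [reps, ← familyRepFn_eq_encard hv]
    exact (hper.int_mul l (g a₀)).trans (hper.int_mul k (g a₀)).symm
  exact hlt.ne heq

theorem stmt1_general (hv : v ≠ 0) (hne : (s.image g).Nonempty)
    (hper : Periodic (familyRepFn s g v B) v) :
    ∃ m : ℕ, 1 ≤ m ∧ m ≤ 2 ^ (((s.image g).max' hne - (s.image g).min' hne) / |v|).toNat ∧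
      ∀ n : ℤ, n ∈ B ↔ n + m ∈ B := by
  set S := s.image g
  set d := ((S.max' hne - S.min' hne) / |v|).toNat
  have hmem {a : ι} (ha : a ∈ s) : g a ∈ Set.Icc (S.min' hne) (S.max' hne) :=
    ⟨S.min'_le _ (Finset.mem_image_of_mem g ha), S.le_max' _ (Finset.mem_image_of_mem g ha)⟩
  obtain ⟨a₀, ha₀, hnonneg⟩ :=
    exists_mem_forall_nonneg_of_eq_add_mul hv (Finset.image_nonempty.mp hne) g
  have hrange (a : ι) (ha : a ∈ s) (x : ℤ) (hx : g a = g a₀ + v * x) : x ∈ Set.Icc 0 (d : ℤ) :=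
    ⟨hnonneg a ha x hx, (le_ediv_abs_of_mul_eq_sub hv (by linear_combination -hx)
      (hmem ha) (hmem ha₀)).trans (Int.self_le_toNat _)⟩
  have hstep (k l : ℤ) (hpast : ∀ j ∈ Set.Icc (1 : ℤ) d, (k - j ∈ B) = (l - j ∈ B)) :
      (k ∈ B) = (l ∈ B) :=
    propext ⟨mem_of_mem_of_forall_sub_mem hv hper ha₀ hrange fun j hj ↦ (hpast j hj).mpr,
      mem_of_mem_of_forall_sub_mem hv hper ha₀ hrange fun j hj ↦ (hpast j hj).mp⟩
  obtain ⟨m, hm, hcard, hperiod⟩ := exists_periodic_le_card_pow hstep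
  exact ⟨m, hm, by simpa using hcard, fun n ↦ (iff_of_eq (hperiod n)).symm⟩

end Representations

theorem stmt1 {h : ℕ} (hh : 1 ≤ h) (u : Fin h → ℤ) (v : ℤ)
    (hu : ∀ i, u i ≠ 0) (hv : v ≠ 0)
    (A : Fin h → Finset ℤ) (hA : ∀ i, (A i).Nonempty) (hA1 : ∃ i, 1 < (A i).card)
    (B : Set ℤ) (hB : B.Infinite) (t : ℕ) (ht : 0 < t)
    (S : Finset ℤ) (hS : S = (Fintype.piFinset A).image fun a => ∑ i, u i * a i)
    (hne : S.Nonempty)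
    (gmin gmax : ℤ) (hgmin : gmin = S.min' hne) (hgmax : gmax = S.max' hne)
    (d : ℕ) (hd : d = ((gmax - gmin) / |v|).toNat)
    (hcomp : ∀ n : ℤ, repFn u v A B n = t) :
    ∃ m : ℕ, 1 ≤ m ∧ m ≤ 2 ^ d ∧ ∀ n : ℤ, n ∈ B ↔ n + m ∈ B := by
  subst hS hgmin hgmax hd
  rw [repFn_eq_familyRepFn] at hcomp
  exact stmt1_general hv hne fun n ↦ (hcomp _).trans (hcomp n).symm
end

section
/- Let h ≥ 1 and let ψ(x_1,…,x_h) = u_1x_1 + ⋯ + u_hx_h be a linear form with nonzero integer coefficients u_1,…,u_h. Let 𝒜 = (A_1,…,A_h) be an h-tuple of nonempty finite sets of integers, let m be a positive integer, and let t be a positive integer. For each i, let F_{A_i}(z) = Σ_{a ∈ A_i} z^a (a Laurent polynomial with integer coefficients), and let Λ_m(z) = 1 + z + z² + ⋯ + z^{m−1}. Then 𝒜 is t-complementing modulo m with respect to ψ if and only if there exists a nonnegative integer L such that z^L · F_{A_1}(z^{u_1}) ⋯ F_{A_h}(z^{u_h}) is a polynomial and z^L · F_{A_1}(z^{u_1})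 ⋯ F_{A_h}(z^{u_h}) ≡ t·Λ_m(z) (mod z^m − 1) in ℤ[z]. -/
open LaurentPolynomial Polynomial

/-!
Reducing exponents modulo `m` maps Laurent polynomials onto the group algebra of `ℤ/mℤ`, and its
restriction to polynomials has kernel `(X ^ m - 1)`: the remainder modulo `X ^ m - 1` of a
polynomial has the same coefficients as its image. The coefficients of the image of
`∑ a ∈ s, T (f a)` are the sizes of the fibres of `f` modulo `m`, while `1 + X + ⋯ + X ^ (m - 1)`
becomes the sum of all group elements. A factor `T L` only translates the coefficients, so it does
not affect whether they are all equal to `t`.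
-/

section CommSemiring

variable {R κ : Type*} [CommSemiring R] (m : ℕ)

/-- Reduction of exponents modulo `m`, the canonical map from Laurent polynomials, the group
algebra of `ℤ`, to the group algebra of `ℤ/mℤ`. The latter plays the role of `R[X] / (X ^ m - 1)`,
with residue classes given by their coefficients. -/
noncomputable def reduceExponents : R[T;T⁻¹] →ₐ[R] AddMonoidAlgebra R (ZMod m) :=
  AddMonoidAlgebra.mapDomainAlgHom R R (Int.castAddHom (ZMod m))

lemma reduceExponents_T (n : ℤ) :
    reduceExponents m (T n : R[T;T⁻¹]) = AddMonoidAlgebra.single (n : ZMod m) 1 :=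
  AddMonoidAlgebra.mapDomain_single

lemma coeff_reduceExponents_T_mul (n : ℤ) (p : R[T;T⁻¹]) (r : ZMod m) :
    (reduceExponents m (T n * p)).coeff r = (reduceExponents m p).coeff (r - n) := by
  rw [map_mul, reduceExponents_T, AddMonoidAlgebra.coeff_single_mul_apply, one_mul,
    neg_add_eq_sub]

lemma coeff_reduceExponents_sum_T (s : Finset κ) (f : κ → ℤ) (r : ZMod m) :
    (reduceExponents m (∑ a ∈ s, T (f a) : R[T;T⁻¹])).coeff r =
      (s.filter fun a => (f a : ZMod m) = r).card := by
  simp only [map_sum, reduceExponents_T, AddMonoidAlgebra.coeff_sum, Finsupp.finsetSum_apply,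
    AddMonoidAlgebra.coeff_single, Finsupp.single_apply, Finset.sum_boole]

variable {m}

lemma coeff_reduceExponents_toLaurent_of_natDegree_lt {P : R[X]} (hP : P.natDegree < m) {k : ℕ}
    (hk : k < m) : (reduceExponents m (toLaurent P)).coeff (k : ZMod m) = P.coeff k := by
  have hPk (i : ℕ) (hi : i ∈ Finset.range m) :
      (if (i : ZMod m) = k then P.coeff i else 0) = if i = k then P.coeff i else 0 := by
    simp only [(CharP.natCast_injOn_Iio (ZMod m) m).eq_iff (Finset.mem_range.1 hi) hk]
  conv_lhs => rw [P.as_sum_range_C_mul_X_pow' hP]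
  simp only [map_sum, toLaurent_C_mul_X_pow, ← LaurentPolynomial.smul_eq_C_mul, map_smul,
    reduceExponents_T, Int.cast_natCast, AddMonoidAlgebra.coeff_sum, Finsupp.finsetSum_apply,
    AddMonoidAlgebra.coeff_smul, AddMonoidAlgebra.coeff_single, Finsupp.smul_apply,
    Finsupp.single_apply, smul_eq_mul, mul_ite, mul_one, mul_zero]
  rw [Finset.sum_congr rfl hPk, Finset.sum_ite_eq', if_pos (Finset.mem_range.2 hk)]

lemma coeff_reduceExponents_geom_sum [NeZero m] (r : ZMod m) :
    (reduceExponents m (toLaurent (∑ j ∈ Finset.range m, X ^ j : R[X]))).coeff r = 1 := by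
  have hfilter : (Finset.range m).filter (fun j : ℕ => ((j : ℤ) : ZMod m) = r) = {r.val} := by
    ext j
    rw [Finset.mem_filter, Finset.mem_range, Finset.mem_singleton, Int.cast_natCast]
    refine ⟨?_, ?_⟩
    · rintro ⟨hj, rfl⟩
      exact (ZMod.val_cast_of_lt hj).symm
    · rintro rfl
      exact ⟨r.val_lt, r.natCast_zmod_val⟩
  simp only [map_sum toLaurent, toLaurent_X_pow]
  rw [coeff_reduceExponents_sum_T, hfilter, Finset.card_singleton, Nat.cast_one]

lemma prod_sum_T {ι : Type*} [Fintype ι] [DecidableEq ι] {κ : ι → Type*} (s : ∀ i, Finset (κ i))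
    (f : ∀ i, κ i → ℤ) :
    ∏ i, ∑ a ∈ s i, (T (f i a) : R[T;T⁻¹]) =
      ∑ a ∈ Fintype.piFinset s, T (∑ i, f i (a i)) := by
  rw [Finset.prod_univ_sum]
  refine Finset.sum_congr rfl fun a _ => ?_
  simp only [T, AddMonoidAlgebra.prod_single, Finset.prod_const_one]

end CommSemiring

lemma forall_mem_range_card_filter_emod_eq_iff {κ : Type*} {m : ℕ} [NeZero m]
    (s : Finset κ) (f : κ → ℤ) (t : ℕ) :
    (∀ ℓ ∈ Finset.range m, (s.filter fun a => f a % (m : ℤ) = (ℓ : ℤ)).card = t) ↔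
      ∀ r : ZMod m, (s.filter fun a => (f a : ZMod m) = r).card = t := by
  have hmod (n : ℤ) (r : ZMod m) : n % (m : ℤ) = (r.val : ℤ) ↔ (n : ZMod m) = r := by
    rw [← ZMod.val_intCast, Nat.cast_inj, (ZMod.val_injective m).eq_iff]
  refine ⟨fun H r => ?_, fun H ℓ hℓ => ?_⟩
  · simpa only [hmod] using H r.val (Finset.mem_range.2 r.val_lt)
  · simpa only [← hmod, ZMod.val_cast_of_lt (Finset.mem_range.1 hℓ)] using H ℓ

section CommRing

variable {R : Type*} [CommRing R] {m : ℕ}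

variable (m) in
lemma reduceExponents_toLaurent_X_pow_sub_one :
    reduceExponents m (toLaurent (X ^ m - 1 : R[X])) = 0 := by
  rw [map_sub, map_sub, toLaurent_X_pow, reduceExponents_T, map_one, map_one, Int.cast_natCast,
    ZMod.natCast_self, AddMonoidAlgebra.one_def, sub_self]

variable [NeZero m]

variable (R m) in
lemma monic_X_pow_sub_one : (X ^ m - 1 : R[X]).Monic :=
  monic_X_pow_sub_C 1 (NeZero.ne m)

lemma natDegree_modByMonic_X_pow_sub_one_lt (Q : R[X]) :
    (Q %ₘ (X ^ m - 1)).natDegree < m := by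
  nontriviality R using NeZero.pos m
  have hdeg : (X ^ m - 1 : R[X]).natDegree = m := natDegree_X_pow_sub_C (r := 1)
  have hne : (X ^ m - 1 : R[X]) ≠ 1 := fun h =>
    NeZero.ne m (by rw [← hdeg, h, natDegree_one])
  simpa only [hdeg] using natDegree_modByMonic_lt Q (monic_X_pow_sub_one R m) hne

lemma coeff_modByMonic_X_pow_sub_one (Q : R[X]) {k : ℕ} (hk : k < m) :
    (Q %ₘ (X ^ m - 1)).coeff k = (reduceExponents m (toLaurent Q)).coeff (k : ZMod m) := by
  rw [← coeff_reduceExponents_toLaurent_of_natDegree_lt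
    (natDegree_modByMonic_X_pow_sub_one_lt Q) hk]
  conv_rhs => rw [← modByMonic_add_div Q (X ^ m - 1)]
  rw [map_add, map_add, map_mul, map_mul, reduceExponents_toLaurent_X_pow_sub_one, zero_mul,
    add_zero]

theorem X_pow_sub_one_dvd_iff_reduceExponents_eq_zero {Q : R[X]} :
    X ^ m - 1 ∣ Q ↔ reduceExponents m (toLaurent Q) = 0 := by
  refine ⟨?_, fun hQ => ?_⟩
  · rintro ⟨S, rfl⟩
    rw [map_mul, map_mul, reduceExponents_toLaurent_X_pow_sub_one, zero_mul]
  · rw [← modByMonic_eq_zero_iff_dvd (monic_X_pow_sub_one R m)]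
    ext k
    rcases lt_or_ge k m with hk | hk
    · rw [coeff_modByMonic_X_pow_sub_one Q hk, hQ, AddMonoidAlgebra.coeff_zero,
        Finsupp.zero_apply, Polynomial.coeff_zero]
    · exact coeff_eq_zero_of_natDegree_lt
        ((natDegree_modByMonic_X_pow_sub_one_lt Q).trans_le hk)

theorem X_pow_sub_one_dvd_sub_smul_geom_sum_iff {P : R[X]} {c : R} :
    X ^ m - 1 ∣ P - c • ∑ j ∈ Finset.range m, X ^ j ↔
      ∀ r : ZMod m, (reduceExponents m (toLaurent P)).coeff r = c := by
  rw [X_pow_sub_one_dvd_iff_reduceExponents_eq_zero, map_sub, map_sub, sub_eq_zero,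
    ← toLaurentAlg_apply (_ • _), map_smul, map_smul, toLaurentAlg_apply,
    AddMonoidAlgebra.ext_iff, DFunLike.ext_iff]
  simp only [AddMonoidAlgebra.coeff_smul, Finsupp.smul_apply, coeff_reduceExponents_geom_sum,
    smul_eq_mul, mul_one]

end CommRing

theorem card_filter_emod_eq_iff_X_pow_sub_one_dvd {R κ : Type*} [CommRing R] [CharZero R]
    {m : ℕ} [NeZero m] (s : Finset κ) (f : κ → ℤ) (t : ℕ) {L : ℤ} {P : R[X]}
    (hP : toLaurent P = T L * ∑ a ∈ s, T (f a)) :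
    (∀ ℓ ∈ Finset.range m, (s.filter fun a => f a % (m : ℤ) = (ℓ : ℤ)).card = t) ↔
      X ^ m - 1 ∣ P - (t : R) • ∑ j ∈ Finset.range m, X ^ j := by
  simp only [X_pow_sub_one_dvd_sub_smul_geom_sum_iff, hP, coeff_reduceExponents_T_mul,
    coeff_reduceExponents_sum_T, Nat.cast_inj, forall_mem_range_card_filter_emod_eq_iff]
  exact (Equiv.subRight (L : ZMod m)).forall_congr_right.symm

theorem stmt2_general {R κ : Type*} [CommRing R] [CharZero R] (s : Finset κ) (f : κ → ℤ)
    (m : ℕ) (hm : 0 < m) (t : ℕ) :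
    (∀ ℓ ∈ Finset.range m, (s.filter fun a => f a % (m : ℤ) = (ℓ : ℤ)).card = t) ↔
      ∃ (L : ℕ) (P : R[X]), toLaurent P = T (L : ℤ) * ∑ a ∈ s, T (f a) ∧
        X ^ m - 1 ∣ P - (t : R) • ∑ j ∈ Finset.range m, X ^ j := by
  have : NeZero m := ⟨hm.ne'⟩
  refine ⟨fun H => ?_, fun ⟨L, P, hP, hdvd⟩ =>
    (card_filter_emod_eq_iff_X_pow_sub_one_dvd s f t hP).2 hdvd⟩
  obtain ⟨L, P, hP⟩ := exists_T_pow (∑ a ∈ s, (T (f a) : R[T;T⁻¹]))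
  rw [← T_mul] at hP
  exact ⟨L, P, hP, (card_filter_emod_eq_iff_X_pow_sub_one_dvd s f t hP).1 H⟩

theorem stmt2 {h : ℕ} (hh : 1 ≤ h) (u : Fin h → ℤ) (hu : ∀ i, u i ≠ 0)
    (A : Fin h → Finset ℤ) (hA : ∀ i, (A i).Nonempty)
    (m : ℕ) (hm : 0 < m) (t : ℕ) (ht : 0 < t) :
    (∀ ℓ ∈ Finset.range m,
        ((Fintype.piFinset A).filter
          (fun a => (∑ i, u i * a i) % (m : ℤ) = (ℓ : ℤ))).card = t) ↔
      ∃ (L : ℕ) (P : Polynomial ℤ),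
        Polynomial.toLaurent P =
          LaurentPolynomial.T (L : ℤ) *
            ∏ i, ∑ a ∈ A i, LaurentPolynomial.T (u i * a) ∧
        (X ^ m - 1 : Polynomial ℤ) ∣
          P - (t : ℤ) • ∑ j ∈ Finset.range m, (X : Polynomial ℤ) ^ j := by
  rw [prod_sum_T A fun i a => u i * a]
  exact stmt2_general (Fintype.piFinset A) (fun a => ∑ i, u i * a i) m hm t
end

section
/- Let h ≥ 1 and let φ(x_1,…,x_h,y) = u_1x_1 + ⋯ + u_hx_h + vy be a linear form with nonzero integer coefficients u_1,…,u_h,v. Let 𝒜 = (A_1,…,A_h) be an h-tuple of nonempty finite sets of integers, and let f : ℤ → ℕ₀ ∪ {∞} be a function. Suppose there is a strictly increasing sequence {L_N}_{N=1}^∞ of positive integers with the property that, for every N ≥ 1, there exists a set B_N of integers satisfying R^(φ)_{𝒜,B_N}(n) = f(n) for all integers n with |n| ≤ L_N. Then there exists a set B of integers such that R^(φ)_{𝒜,B}(n) = f(n) for all integers n. -/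
/-!
The number of representations of `n` depends only on the membership in `B` of the finitely many `b`
that occur in a solution of `φ(a, b) = n` with `a` in the finite box `A₁ × ⋯ × A_h`. So
`B ↦ R_{𝒜,B}(n)` is locally constant on the compact space of all sets of integers, and any
ultrafilter limit of the sets `B_N` has the prescribed representation function.
-/

open Filter

section Ultralimit

variable {ι α : Type*} {U : Ultrafilter ι} {S : ι → Set α}

/-- The limit of a family of sets `S` along an ultrafilter `U`, that is, its limit in the compact
space `{0, 1}^α`: an element belongs to it when it belongs to `U`-almost all `S i`. -/
def ultralimit (U : Ultrafilter ι) (S : ι → Set α) : Set α :=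
  {x | ∀ᶠ i in (U : Filter ι), x ∈ S i}

lemma eventually_mem_ultralimit_iff (x : α) :
    ∀ᶠ i in (U : Filter ι), (x ∈ ultralimit U S ↔ x ∈ S i) := by
  by_cases hx : x ∈ ultralimit U S
  · have hmem : ∀ᶠ i in (U : Filter ι), x ∈ S i := hx
    exact hmem.mono fun i hi => iff_of_true hx hi
  · have hnot : ∀ᶠ i in (U : Filter ι), x ∉ S i := Ultrafilter.eventually_not.2 hx
    exact hnot.mono fun i hi => iff_of_false hx hi

lemma eventually_forall_mem_ultralimit_iff {T : Set α} (hT : T.Finite) :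
    ∀ᶠ i in (U : Filter ι), ∀ x ∈ T, (x ∈ ultralimit U S ↔ x ∈ S i) :=
  (eventually_all_finite hT).2 fun x _ => eventually_mem_ultralimit_iff x

end Ultralimit

section RepCard

variable {α β γ : Type*} {φ : α → β → γ} {A : Set α}

/-- The representation function of an arbitrary map `φ`: the number of pairs `(a, b) ∈ A × B` with
`φ a b = n`. The function `repFn` is the case of a linear form `φ` and a box `A`. -/
noncomputable def repCard (φ : α → β → γ) (A : Set α) (B : Set β) (n : γ) : ℕ∞ :=
  {p : α × β | p.1 ∈ A ∧ p.2 ∈ B ∧ φ p.1 p.2 = n}.encard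

lemma repCard_congr {B B' : Set β} {n : γ}
    (h : ∀ a ∈ A, ∀ b, φ a b = n → (b ∈ B ↔ b ∈ B')) :
    repCard φ A B n = repCard φ A B' n := by
  refine congrArg Set.encard (Set.ext fun ⟨a, b⟩ => and_congr_right fun ha => ?_)
  exact and_congr_left fun hn => h a ha b hn

lemma eventually_repCard_ultralimit_eq {ι : Type*} {U : Ultrafilter ι} {S : ι → Set β} {n : γ}
    (hfin : {p : α × β | p.1 ∈ A ∧ φ p.1 p.2 = n}.Finite) :
    ∀ᶠ i in (U : Filter ι), repCard φ A (ultralimit U S) n = repCard φ A (S i) n := by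
  filter_upwards [eventually_forall_mem_ultralimit_iff (hfin.image Prod.snd)] with i hi
  exact repCard_congr fun a ha b hn => hi b ⟨(a, b), ⟨ha, hn⟩, rfl⟩

theorem stmt3_general (hfin : ∀ n, {p : α × β | p.1 ∈ A ∧ φ p.1 p.2 = n}.Finite) (f : γ → ℕ∞)
    (hf : ∀ F : Finset γ, ∃ B : Set β, ∀ n ∈ F, repCard φ A B n = f n) :
    ∃ B : Set β, ∀ n, repCard φ A B n = f n := by
  classical
  choose S hS using hf
  let U : Ultrafilter (Finset γ) := Ultrafilter.of atTop
  refine ⟨ultralimit U S, fun n => ?_⟩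
  have hmem : ∀ᶠ F in (U : Filter (Finset γ)), n ∈ F :=
    Ultrafilter.of_le atTop <|
      (eventually_ge_atTop {n}).mono fun _ => Finset.singleton_subset_iff.1
  obtain ⟨F, hlim, hnF⟩ := ((eventually_repCard_ultralimit_eq (hfin n)).and hmem).exists
  exact hlim.trans (hS F n hnF)

lemma finite_setOf_mem_and_eq (hA : A.Finite) (hφ : ∀ a ∈ A, Function.Injective (φ a)) (n : γ) :
    {p : α × β | p.1 ∈ A ∧ φ p.1 p.2 = n}.Finite := by
  refine Set.Finite.of_injOn (f := Prod.fst) (fun p hp => hp.1) ?_ hA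
  rintro ⟨a, b⟩ ⟨ha, hb⟩ ⟨_, c⟩ ⟨_, hc⟩ rfl
  exact congrArg (Prod.mk a) (hφ a ha (hb.trans hc.symm))

end RepCard

lemma finite_linearForm_fiber {ι R : Type*} [Fintype ι] [Ring R] [NoZeroDivisors R] (u : ι → R)
    {v : R} (hv : v ≠ 0) (A : ι → Finset R) (n : R) :
    {p : (ι → R) × R |
      p.1 ∈ {a | ∀ i, a i ∈ A i} ∧ (∑ i, u i * p.1 i) + v * p.2 = n}.Finite :=
  finite_setOf_mem_and_eq (φ := fun (a : ι → R) b => (∑ i, u i * a i) + v * b)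
    (Set.Finite.pi' fun i => (A i).finite_toSet)
    (fun a _ => (add_right_injective (∑ i, u i * a i)).comp (mul_right_injective₀ hv)) n

lemma exists_forall_mem_finset_of_eventually {ι α β R : Type*} [Preorder R] {l : Filter ι}
    [l.NeBot] {L : ι → R} (hL : Tendsto L l atTop) (g : α → R) {P : β → α → Prop}
    (hP : ∀ᶠ N in l, ∃ b, ∀ n, g n ≤ L N → P b n) (F : Finset α) :
    ∃ b, ∀ n ∈ F, P b n := by
  have hF : ∀ᶠ N in l, ∀ n ∈ F, g n ≤ L N :=
    (eventually_all_finset F).2 fun n _ => hL.eventually_ge_atTop (g n)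
  obtain ⟨N, ⟨b, hb⟩, hN⟩ := (hP.and hF).exists
  exact ⟨b, fun n hn => hb n (hN n hn)⟩

lemma repFn_eq_repCard {h : ℕ} (u : Fin h → ℤ) (v : ℤ) (A : Fin h → Finset ℤ) (B : Set ℤ) (n : ℤ) :
    repFn u v A B n =
      repCard (fun (a : Fin h → ℤ) b => (∑ i, u i * a i) + v * b) {a | ∀ i, a i ∈ A i} B n :=
  rfl

theorem stmt3 {h : ℕ} (hh : 1 ≤ h) (u : Fin h → ℤ) (v : ℤ)
    (hu : ∀ i, u i ≠ 0) (hv : v ≠ 0)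
    (A : Fin h → Finset ℤ) (hA : ∀ i, (A i).Nonempty)
    (f : ℤ → ℕ∞) (L : ℕ → ℕ) (hL : StrictMono L) (hLpos : ∀ N, 0 < L N)
    (hBN : ∀ N : ℕ, 1 ≤ N → ∃ B : Set ℤ, ∀ n : ℤ, |n| ≤ (L N : ℤ) →
      repFn u v A B n = f n) :
    ∃ B : Set ℤ, ∀ n : ℤ, repFn u v A B n = f n := by
  simp only [repFn_eq_repCard] at hBN ⊢
  exact stmt3_general (finite_linearForm_fiber u hv A) f <|
    exists_forall_mem_finset_of_eventually
      (tendsto_natCast_atTop_atTop.comp hL.tendsto_atTop) (|·|)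
      ((eventually_ge_atTop 1).mono hBN)
end

section
/- Let h ≥ 1 and let φ(x_1,…,x_h,y) = u_1x_1 + ⋯ + u_hx_h + y be a linear form with nonzero integer coefficients u_1,…,u_h and coefficient 1 on y. Let 𝒜 = (A_1,…,A_h) be an h-tuple of nonempty finite sets of integers and let t ≥ 1 be an integer. Suppose there is a strictly increasing sequence {L_N}_{N=1}^∞ of positive integers such that, for every N ≥ 1, there exist a set B_N of integers and a set I_N consisting of 2L_N + 1 consecutive integers with R^(φ)_{𝒜,B_N}(n) = t for all n ∈ I_N. Then there exists a set B of integers such that R^(φ)_{𝒜,B}(n) = t for all integers n. -/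
/-!
For `v ≠ 0`, the number of representations of a given `n` depends only on which of finitely many
integers belong to `B`. Hence, by compactness of the space of subsets of `ℤ`, any representation
function that can be realised on every finite set can be realised on all of `ℤ`: the limit of the
local solutions along an ultrafilter agrees with one of them near any prescribed `n`. Since
translating `B` translates the representation function, a constant value on arbitrarily long
intervals is a constant value on arbitrarily long intervals around `0`.
-/

open Filter

theorem eventually_mem_liminf_iff {ι α : Type*} (U : Ultrafilter ι) (C : ι → Set α) (x : α) :
    ∀ᶠ i in U, (x ∈ liminf C U ↔ x ∈ C i) := by
  rw [mem_liminf_iff_eventually_mem]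
  by_cases hx : ∀ᶠ i in U, x ∈ C i
  · filter_upwards [hx] with i hi using iff_of_true hx hi
  · filter_upwards [Ultrafilter.eventually_not.2 hx] with i hi using iff_of_false hx hi

/-- The integers `y` that can occur as the last coordinate of a solution of
`u₁x₁ + ⋯ + u_h x_h + v y = n` with `x_i ∈ A_i`; whether other integers lie in `B` does not
affect `repFn u v A B n`. -/
def lastCoords {h : ℕ} (u : Fin h → ℤ) (v : ℤ) (A : Fin h → Finset ℤ) (n : ℤ) : Set ℤ :=
  {y | ∃ x : Fin h → ℤ, (∀ i, x i ∈ A i) ∧ (∑ i, u i * x i) + v * y = n}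

section RepFn

variable {h : ℕ} {u : Fin h → ℤ} {v : ℤ} {A : Fin h → Finset ℤ}

theorem finite_lastCoords (hv : v ≠ 0) (n : ℤ) : (lastCoords u v A n).Finite := by
  refine ((Fintype.piFinset A).finite_toSet.image fun x ↦ (n - ∑ i, u i * x i) / v).subset ?_
  rintro y ⟨x, hx, rfl⟩
  exact ⟨x, Fintype.mem_piFinset.2 hx, by simp [hv]⟩

theorem repFn_congr {B B' : Set ℤ} {n : ℤ} (hB : ∀ y ∈ lastCoords u v A n, (y ∈ B ↔ y ∈ B')) :
    repFn u v A B n = repFn u v A B' n := by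
  refine congrArg Set.encard (Set.ext fun p ↦ and_congr_right fun hA ↦ and_congr_left fun hn ↦ ?_)
  exact hB p.2 ⟨p.1, hA, hn⟩

theorem repFn_preimage_add_right (B : Set ℤ) (k n : ℤ) :
    repFn u v A ((· + k) ⁻¹' B) n = repFn u v A B (n + v * k) := by
  refine Set.encard_congr <|
    ((Equiv.refl _).prodCongr (Equiv.addRight k)).subtypeEquiv fun p ↦ ?_
  refine and_congr_right fun _ ↦ and_congr_right fun _ ↦ ?_
  simp [mul_add, ← add_assoc]

theorem eventually_repFn_liminf_eq {ι : Type*} (hv : v ≠ 0) (U : Ultrafilter ι) (C : ι → Set ℤ)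
    (n : ℤ) : ∀ᶠ i in U, repFn u v A (liminf C U) n = repFn u v A (C i) n := by
  have hC : ∀ᶠ i in U, ∀ y ∈ lastCoords u v A n, (y ∈ liminf C U ↔ y ∈ C i) :=
    (finite_lastCoords hv n).eventually_all.2 fun y _ ↦ eventually_mem_liminf_iff U C y
  exact hC.mono fun _ ↦ repFn_congr

theorem exists_forall_repFn_eq_of_forall_finset (hv : v ≠ 0) {f : ℤ → ℕ∞}
    (hf : ∀ s : Finset ℤ, ∃ B : Set ℤ, ∀ n ∈ s, repFn u v A B n = f n) :
    ∃ B : Set ℤ, ∀ n, repFn u v A B n = f n := by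
  choose C hC using hf
  let U : Ultrafilter (Finset ℤ) := .of atTop
  refine ⟨liminf C U, fun n ↦ ?_⟩
  have hn : ∀ᶠ s : Finset ℤ in U, n ∈ s :=
    ((eventually_ge_atTop {n}).filter_mono (Ultrafilter.of_le atTop)).mono fun _ ↦
      Finset.singleton_subset_iff.1
  obtain ⟨s, hs, hns⟩ := ((eventually_repFn_liminf_eq hv U C n).and hn).exists
  exact hs.trans (hC s n hns)

-- Translating `B` by `k` moves the represented integers by `v * k`, so only multiples of `v` can be
-- moved to `0`; rounding `c` to such a multiple costs less than `|v|` in the radius.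
theorem exists_forall_abs_le_repFn_eq (hv : v ≠ 0) {t : ℕ∞} {B : Set ℤ} {c K : ℤ}
    (hB : ∀ n, |n - c| ≤ K + |v| → repFn u v A B n = t) :
    ∃ B' : Set ℤ, ∀ n, |n| ≤ K → repFn u v A B' n = t := by
  refine ⟨(· + c / v) ⁻¹' B, fun n hn ↦ ?_⟩
  rw [repFn_preimage_add_right]
  apply hB
  calc |n + v * (c / v) - c| = |n - c % v| := congrArg abs (by rw [Int.emod_def]; ring)
    _ ≤ |n| + |c % v| := abs_sub _ _
    _ ≤ K + |v| := by
      rw [abs_of_nonneg (Int.emod_nonneg c hv)]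
      exact add_le_add hn (Int.emod_lt_abs c hv).le

end RepFn

theorem stmt4_general {h : ℕ} (u : Fin h → ℤ) {v : ℤ} (hv : v ≠ 0) (A : Fin h → Finset ℤ) (t : ℕ∞)
    (hB : ∀ K : ℕ, ∃ (B : Set ℤ) (c : ℤ), ∀ n : ℤ, |n - c| ≤ K → repFn u v A B n = t) :
    ∃ B : Set ℤ, ∀ n : ℤ, repFn u v A B n = t := by
  refine exists_forall_repFn_eq_of_forall_finset hv fun s ↦ ?_
  obtain ⟨B, c, hBc⟩ := hB (s.sup Int.natAbs + v.natAbs)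
  obtain ⟨B', hB'⟩ := exists_forall_abs_le_repFn_eq hv (K := (s.sup Int.natAbs : ℕ)) fun n hn ↦
    hBc n (by simpa only [Nat.cast_add, Int.natCast_natAbs] using hn)
  refine ⟨B', fun n hn ↦ hB' n ?_⟩
  rw [Int.abs_eq_natAbs]
  exact_mod_cast Finset.le_sup (f := Int.natAbs) hn

theorem stmt4 {h : ℕ} (hh : 1 ≤ h) (u : Fin h → ℤ) (hu : ∀ i, u i ≠ 0)
    (A : Fin h → Finset ℤ) (hA : ∀ i, (A i).Nonempty)
    (t : ℕ) (ht : 1 ≤ t)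
    (L : ℕ → ℕ) (hL : StrictMono L) (hLpos : ∀ N, 0 < L N)
    (hBN : ∀ N : ℕ, 1 ≤ N → ∃ (B : Set ℤ) (c : ℤ), ∀ n : ℤ,
      |n - c| ≤ (L N : ℤ) → repFn u 1 A B n = t) :
    ∃ B : Set ℤ, ∀ n : ℤ, repFn u 1 A B n = t := by
  exact stmt4_general u one_ne_zero A t fun K ↦ (hBN (K + 1) K.succ_pos).imp fun B ↦
    Exists.imp fun c hB n hn ↦ hB n (hn.trans (mod_cast K.le_succ.trans hL.le_apply))
end

section
/- Let h ≥ 1 and let φ(x_1,…,x_h,y) = u_1x_1 + ⋯ + u_hx_h + vy be a linear form with nonzero integer coefficients u_1,…,u_h and v ≥ 1, and set ψ(x_1,…,x_h) = u_1x_1 + ⋯ + u_hx_h. Let 𝒜 = (A_1,…,A_h) be an h-tuple of nonempty finite sets of integers, let B be a set of integers, and let t ≥ 1 be an integer such that (𝒜,B) is t-complementing with respect to φ. Let g_max = max(ψ(𝒜)), and let G_max = {(a_1,…,a_h) ∈ A_1 × ⋯ × A_h : ψ(a_1,…,a_h) = g_max}. Then for every integer n, |G_max| · χ_B(n) = t −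 Σ χ_B(n + [g_max − ψ(a_1,…,a_h)]/v), where the sum is over all (a_1,…,a_h) ∈ A_1 × ⋯ × A_h with (a_1,…,a_h) ∉ G_max, and a summand is counted as 0 whenever v does not divide g_max − ψ(a_1,…,a_h). -/
/-!
A solution of `ψ(a) + v b = m` is determined by `a`, and it exists for exactly those `a` with
`m - ψ(a) ∈ v · B`. Hence `t = ∑ₐ χ_{v·B}(m - ψ(a))` for every `m`. Taking `m = g + v n`, the
summand of `a` is `χ_B(n + (g - ψ(a)) / v)` or `0` according to whether `v ∣ g - ψ(a)`, and it is
`χ_B(n)` for each `a` with `ψ(a) = g`.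
-/

open scoped Classical

/-- The characteristic function of a set `B` of integers. -/
noncomputable def chi (B : Set ℤ) (n : ℤ) : ℤ := if n ∈ B then 1 else 0

theorem encard_setOf_add_eq {α β G : Type*} [AddGroup G] (s : Finset α) (B : Set β) (f : α → G)
    {g : β → G} (hg : Function.Injective g) (m : G) :
    {p : α × β | p.1 ∈ s ∧ p.2 ∈ B ∧ f p.1 + g p.2 = m}.encard =
      (s.filter fun a => -f a + m ∈ g '' B).card := by
  have fst_injOn :
      Set.InjOn Prod.fst {p : α × β | p.1 ∈ s ∧ p.2 ∈ B ∧ f p.1 + g p.2 = m} := by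
    rintro ⟨a, b⟩ ⟨-, -, hb⟩ ⟨_, b'⟩ ⟨-, -, hb'⟩ rfl
    exact congrArg (Prod.mk a) (hg (add_left_cancel (hb.trans hb'.symm)))
  rw [← fst_injOn.encard_image, ← Set.encard_coe_eq_coe_finsetCard]
  congr 1
  ext a
  simp [eq_neg_add_iff_add_eq]

theorem repFn_eq_card {h : ℕ} {v : ℤ} (hv : v ≠ 0) (u : Fin h → ℤ) (A : Fin h → Finset ℤ)
    (B : Set ℤ) (m : ℤ) :
    repFn u v A B m =
      ((Fintype.piFinset A).filter fun a => m - ∑ i, u i * a i ∈ (v * ·) '' B).card := by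
  simpa only [repFn, Fintype.mem_piFinset, neg_add_eq_sub] using
    encard_setOf_add_eq (Fintype.piFinset A) B (fun a => ∑ i, u i * a i)
      (mul_right_injective₀ hv) m

theorem sum_chi {α : Type*} (s : Finset α) (C : Set ℤ) (f : α → ℤ) :
    ∑ a ∈ s, chi C (f a) = (s.filter fun a => f a ∈ C).card :=
  Finset.sum_boole _ _

theorem chi_image {g : ℤ → ℤ} (hg : Function.Injective g) (B : Set ℤ) (n : ℤ) :
    chi (g '' B) (g n) = chi B n := by
  simp only [chi, hg.mem_set_image]

theorem chi_image_mul_of_not_dvd {v k : ℤ} (hk : ¬v ∣ k) (B : Set ℤ) :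
    chi ((v * ·) '' B) k = 0 :=
  if_neg fun ⟨b, _, hb⟩ => hk ⟨b, hb.symm⟩

theorem chi_image_mul_add {v : ℤ} (hv : v ≠ 0) (B : Set ℤ) (k n : ℤ) :
    chi ((v * ·) '' B) (k + v * n) = if v ∣ k then chi B (n + k / v) else 0 := by
  split_ifs with hk
  · rw [← chi_image (mul_right_injective₀ hv) B, mul_add, Int.mul_ediv_cancel' hk, add_comm]
  · exact chi_image_mul_of_not_dvd (by rwa [dvd_add_left (dvd_mul_right v n)]) B

theorem sum_chi_image_mul {α : Type*} {v : ℤ} (hv : v ≠ 0) (s : Finset α) (f : α → ℤ)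
    (B : Set ℤ) (g n : ℤ) :
    ∑ a ∈ s, chi ((v * ·) '' B) (g + v * n - f a) =
      ((s.filter fun a => f a = g).card : ℤ) * chi B n +
        ∑ a ∈ s.filter fun a => f a ≠ g,
          if v ∣ g - f a then chi B (n + (g - f a) / v) else 0 := by
  rw [← Finset.sum_filter_add_sum_filter_not s fun a => f a = g]
  congr 1
  · rw [← nsmul_eq_mul]
    refine Finset.sum_eq_card_nsmul fun a ha => ?_
    rw [(Finset.mem_filter.mp ha).2, add_sub_cancel_left, chi_image (mul_right_injective₀ hv)]
  · refine Finset.sum_congr rfl fun a _ => ?_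
    rw [add_sub_right_comm, chi_image_mul_add hv]

theorem stmt7_general {h : ℕ} (u : Fin h → ℤ) {v : ℤ} (hv : v ≠ 0) (A : Fin h → Finset ℤ)
    (B : Set ℤ) (t : ℕ) (g n : ℤ) (hrep : repFn u v A B (g + v * n) = t) :
    (((Fintype.piFinset A).filter fun a => (∑ i, u i * a i) = g).card : ℤ) * chi B n =
      (t : ℤ) -
        ∑ a ∈ (Fintype.piFinset A).filter fun a => (∑ i, u i * a i) ≠ g,
          if v ∣ (g - ∑ i, u i * a i) then chi B (n + (g - ∑ i, u i * a i) / v) else 0 := by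
  have t_eq_sum :
      (t : ℤ) = ∑ a ∈ Fintype.piFinset A, chi ((v * ·) '' B) (g + v * n - ∑ i, u i * a i) := by
    rw [repFn_eq_card hv, Nat.cast_inj] at hrep
    rw [sum_chi, hrep]
  rw [t_eq_sum, sum_chi_image_mul hv, add_sub_cancel_right]

theorem stmt7 {h : ℕ} (hh : 1 ≤ h) (u : Fin h → ℤ) (v : ℤ)
    (hu : ∀ i, u i ≠ 0) (hv : 1 ≤ v)
    (A : Fin h → Finset ℤ) (hA : ∀ i, (A i).Nonempty)
    (B : Set ℤ) (t : ℕ) (ht : 1 ≤ t)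
    (hcomp : ∀ n : ℤ, repFn u v A B n = t)
    (S : Finset ℤ) (hS : S = (Fintype.piFinset A).image fun a => ∑ i, u i * a i)
    (hne : S.Nonempty) (gmax : ℤ) (hgmax : gmax = S.max' hne) :
    ∀ n : ℤ,
      (((Fintype.piFinset A).filter fun a => (∑ i, u i * a i) = gmax).card : ℤ) *
          chi B n =
        (t : ℤ) -
          ∑ a ∈ (Fintype.piFinset A).filter fun a => (∑ i, u i * a i) ≠ gmax,
            if v ∣ (gmax - ∑ i, u i * a i) then
              chi B (n + (gmax - ∑ i, u i * a i) / v)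
            else 0 := by
  exact fun n => stmt7_general u (by lia) A B t gmax n (hcomp _)
end
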